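/- Let n ≥ 1 and s ∈ (0,1). Let u : ℝⁿ → ℝ be a Schwartz function and let w(x,y) = (1/d_{n,s}) ∫_{ℝⁿ} y^{2s} u(ξ)(|x-ξ|²+y²)^{-(n+2s)/2} dξ be its normalized Caffarelli–Silvestre extension, where d_{n,s} = ∫_{ℝⁿ}(|z|²+1)^{-(n+2s)/2} dz. Then ∫₀^∞ ∫_{ℝⁿ} y^{1-2s} |∇w(x,y)|² dx dy = (2s / C_s) ∫_{ℝⁿ} |ξ|^{2s} |𝓕u(ξ)|² dξ, where C_s = 4^s Γ(1+s)/Γ(1-s) and ∇ is the full gradient in (x,y). -/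

import Mathlib

open MeasureTheory Real Filter
open scoped RealInnerProductSpace ENNReal

/-- The Fourier transform with the convention
`𝓕u(ξ) = (2π)^{-n/2} ∫ e^{-i⟨ξ,x⟩} u(x) dx`. -/
noncomputable def FT {n : ℕ} (u : EuclideanSpace ℝ (Fin n) → ℂ)
    (ξ : EuclideanSpace ℝ (Fin n)) : ℂ :=
  (((2 * Real.pi) ^ (-(n : ℝ) / 2) : ℝ) : ℂ) *
    ∫ x : EuclideanSpace ℝ (Fin n),
      Complex.exp (-Complex.I * ((⟪ξ, x⟫ : ℝ) : ℂ)) * u x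

/-- The constant `C_s = 4^s Γ(1+s)/Γ(1-s)`. -/
noncomputable def Cs (s : ℝ) : ℝ := 4 ^ s * Real.Gamma (1 + s) / Real.Gamma (1 - s)

/-!
On the Fourier side the extension is a multiplier: its slice at height `y` has symbol
`Γ(s; π²‖ξ‖²y²) / Γ(s)`, where `Γ(a; k) = ∫₀^∞ τ^(a-1) e^(-τ-k/τ) dτ`, because the Poisson kernel is
a superposition of Gaussians. By Plancherel on each slice, the energy is the integral over `ξ` of
the energies of the modes `y ↦ Γ(s; c y²)` with `c = π²‖ξ‖²`, which scaling turns into `cˢ` times a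
constant. The constant comes from `∫₀^∞ k^(-a) Γ(a; k)² dk = Γ(1 - a) Γ(1 + a)`, an instance of
Tonelli's theorem.
-/

section Plancherel

open scoped FourierTransform SchwartzMap

theorem integral_norm_sq_eq_toReal_eLpNorm_sq {α G : Type*} [MeasurableSpace α] {μ : Measure α}
    [NormedAddCommGroup G] {f : α → G} (hf : MemLp f 2 μ) :
    ∫ x, ‖f x‖ ^ 2 ∂μ = (eLpNorm f 2 μ).toReal ^ 2 := by
  have hnn : 0 ≤ ∫ x, ‖f x‖ ^ 2 ∂μ := by positivity
  rw [hf.eLpNorm_eq_integral_rpow_norm two_ne_zero ENNReal.ofNat_ne_top,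
    ENNReal.toReal_ofReal (by positivity)]
  simp only [ENNReal.toReal_ofNat, Real.rpow_ofNat]
  rw [← one_div, ← Real.sqrt_eq_rpow, Real.sq_sqrt hnn]

variable {E F : Type*} [NormedAddCommGroup E] [InnerProductSpace ℝ E] [FiniteDimensional ℝ E]
  [MeasurableSpace E] [BorelSpace E]

theorem integral_fourier_smul_eq_integral_smul_fourier [NormedAddCommGroup F] [NormedSpace ℂ F]
    [CompleteSpace F] {φ : E → ℂ} {f : E → F} (hφ : Integrable φ) (hf : Integrable f) :
    ∫ ξ, 𝓕 φ ξ • f ξ = ∫ x, φ x • 𝓕 f x := by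
  have h := VectorFourier.integral_fourierIntegral_smul_eq_flip (L := innerₗ E)
    Real.continuous_fourierChar continuous_inner hφ hf
  rwa [flip_innerₗ] at h

variable [NormedAddCommGroup F] [InnerProductSpace ℂ F] [CompleteSpace F] {f : E → F}

theorem fourier_toLp_ae_eq (hf₁ : Integrable f) (hf₂ : MemLp f 2) :
    ((𝓕 (hf₂.toLp f) : Lp F 2 (volume : Measure E)) : E → F) =ᵐ[volume] 𝓕 f := by
  have hcont : Continuous (𝓕 f) :=
    VectorFourier.fourierIntegral_continuous Real.continuous_fourierChar continuous_inner hf₁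
  refine ae_eq_of_integral_contDiff_smul_eq
    ((Lp.memLp _).locallyIntegrable (by norm_num)) hcont.locallyIntegrable fun g hg hgs => ?_
  let φ : 𝓢(E, ℂ) := (hgs.comp_left (g := ((↑) : ℝ → ℂ)) (by simp)).toSchwartzMap
    (Complex.ofRealCLM.contDiff.comp hg)
  have hL2 : ∫ x, (𝓕 φ) x • (hf₂.toLp f) x =
      ∫ x, φ x • (𝓕 (hf₂.toLp f) : Lp F 2 (volume : Measure E)) x := by
    simpa only [TemperedDistribution.fourier_apply, Lp.toTemperedDistribution_apply] using
      congrArg (fun T => T φ) (Lp.fourier_toTemperedDistribution_eq (hf₂.toLp f))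
  calc ∫ x, g x • (𝓕 (hf₂.toLp f) : Lp F 2 (volume : Measure E)) x
      = ∫ x, φ x • (𝓕 (hf₂.toLp f) : Lp F 2 (volume : Measure E)) x := rfl
    _ = ∫ x, 𝓕 (φ : E → ℂ) x • f x := by
        rw [← hL2, SchwartzMap.fourier_coe]
        exact integral_congr_ae (hf₂.coeFn_toLp.mono fun x hx => by simp only [hx])
    _ = ∫ x, φ x • 𝓕 f x := integral_fourier_smul_eq_integral_smul_fourier φ.integrable hf₁
    _ = ∫ x, g x • 𝓕 f x := rfl

theorem memLp_fourier (hf₁ : Integrable f) (hf₂ : MemLp f 2) : MemLp (𝓕 f) 2 :=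
  (memLp_congr_ae (fourier_toLp_ae_eq hf₁ hf₂)).1 (Lp.memLp _)

theorem integral_norm_sq_fourier (hf₁ : Integrable f) (hf₂ : MemLp f 2) :
    ∫ ξ, ‖𝓕 f ξ‖ ^ 2 = ∫ x, ‖f x‖ ^ 2 := by
  rw [integral_norm_sq_eq_toReal_eLpNorm_sq (memLp_fourier hf₁ hf₂),
    integral_norm_sq_eq_toReal_eLpNorm_sq hf₂, ← eLpNorm_congr_ae (fourier_toLp_ae_eq hf₁ hf₂),
    ← Lp.norm_def, Lp.norm_fourier_eq, Lp.norm_toLp]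

end Plancherel

section ExtendedGamma

/-- The extended gamma function `Γ(a; k) = ∫₀^∞ e^{-r - k/r} r^{a-1} dr` of Chaudhry and Zubair,
a multiple of `k^{a/2} K_a(2√k)` with `K_a` the modified Bessel function of the second kind. -/
noncomputable def extGamma (a k : ℝ) : ℝ :=
  ∫ r in Set.Ioi 0, exp (-r - k / r) * r ^ (a - 1)

variable {a k : ℝ}

theorem exp_mul_rpow_nonneg_ae_Ioi (a k : ℝ) :
    0 ≤ᵐ[volume.restrict (Set.Ioi 0)] fun r : ℝ => exp (-r - k / r) * r ^ (a - 1) :=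
  (ae_restrict_mem measurableSet_Ioi).mono fun _ hr =>
    mul_nonneg (exp_pos _).le (rpow_nonneg (le_of_lt hr) _)

theorem extGamma_nonneg (a k : ℝ) : 0 ≤ extGamma a k :=
  integral_nonneg_of_ae (exp_mul_rpow_nonneg_ae_Ioi a k)

theorem extGamma_zero (ha : 0 < a) : extGamma a 0 = Gamma a := by
  simp only [extGamma, zero_div, sub_zero, Real.Gamma_eq_integral ha]

theorem measurable_extGamma (a : ℝ) : Measurable (extGamma a) :=
  (StronglyMeasurable.integral_prod_right (f := fun k r : ℝ => exp (-r - k / r) * r ^ (a - 1))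
    (Measurable.stronglyMeasurable (by fun_prop))).measurable

theorem pow_mul_exp_mul_rpow_le (a : ℝ) (hk : 0 ≤ k) {r : ℝ} (hr : 0 < r) (N : ℕ) :
    k ^ N * (exp (-r - k / r) * r ^ (a - 1)) ≤ N.factorial * (exp (-r) * r ^ (a + N - 1)) := by
  have hpow : (k / r) ^ N ≤ N.factorial * exp (k / r) := by
    rw [← div_le_iff₀' (by positivity)]
    exact pow_div_factorial_le_exp _ (by positivity) N
  calc k ^ N * (exp (-r - k / r) * r ^ (a - 1))
      = (k / r) ^ N * (exp (-r) / exp (k / r) * r ^ (a + N - 1)) := by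
        rw [exp_sub, add_sub_right_comm, rpow_add_natCast hr.ne', div_pow]
        field_simp
    _ ≤ N.factorial * exp (k / r) * (exp (-r) / exp (k / r) * r ^ (a + N - 1)) := by gcongr
    _ = N.factorial * (exp (-r) * r ^ (a + N - 1)) := by field_simp

theorem integrableOn_pow_mul_exp_mul_rpow (hk : 0 ≤ k) (N : ℕ) (ha : 0 < a + N) :
    IntegrableOn (fun r => k ^ N * (exp (-r - k / r) * r ^ (a - 1))) (Set.Ioi 0) := by
  refine ((Real.GammaIntegral_convergent ha).const_mul (N.factorial : ℝ)).mono' (by fun_prop) ?_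
  filter_upwards [ae_restrict_mem measurableSet_Ioi] with r (hr : 0 < r)
  rw [norm_of_nonneg (by positivity)]
  exact pow_mul_exp_mul_rpow_le a hk hr N

theorem integrableOn_exp_mul_rpow_of_pos (a : ℝ) (hk : 0 < k) :
    IntegrableOn (fun r => exp (-r - k / r) * r ^ (a - 1)) (Set.Ioi 0) := by
  obtain ⟨N, hN⟩ := exists_nat_gt (-a)
  have hkN : k ^ N ≠ 0 := by positivity
  refine ((integrableOn_pow_mul_exp_mul_rpow hk.le N (a := a) (by linarith)).const_mul
    (k ^ N)⁻¹).congr (Eventually.of_forall fun r => ?_)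
  exact inv_mul_cancel_left₀ hkN _

theorem pow_mul_extGamma_le (hk : 0 ≤ k) (N : ℕ) (ha : 0 < a + N) :
    k ^ N * extGamma a k ≤ N.factorial * Gamma (a + N) := by
  rw [Real.Gamma_eq_integral ha, extGamma, ← integral_const_mul, ← integral_const_mul]
  exact setIntegral_mono_on (integrableOn_pow_mul_exp_mul_rpow hk N ha)
    ((Real.GammaIntegral_convergent ha).const_mul _) measurableSet_Ioi
    fun r hr => pow_mul_exp_mul_rpow_le a hk hr N

theorem continuousOn_extGamma (ha : 0 < a) : ContinuousOn (extGamma a) (Set.Ici 0) := by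
  refine continuousOn_of_dominated (bound := fun r => exp (-r) * r ^ (a - 1))
    (fun k _ => by fun_prop) (fun k hk => ?_) (Real.GammaIntegral_convergent ha)
    (Eventually.of_forall fun r => by fun_prop)
  filter_upwards [ae_restrict_mem measurableSet_Ioi] with r (hr : 0 < r)
  rw [norm_of_nonneg (by positivity)]
  simpa using pow_mul_exp_mul_rpow_le a hk hr 0

theorem hasDerivAt_extGamma (a : ℝ) (hk : 0 < k) :
    HasDerivAt (extGamma a) (-extGamma (a - 1) k) k := by
  rw [extGamma, ← integral_neg]
  refine (hasDerivAt_integral_of_dominated_loc_of_deriv_le (s := Set.Ioi (k / 2))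
    (F := fun k r => exp (-r - k / r) * r ^ (a - 1))
    (F' := fun k r => -(exp (-r - k / r) * r ^ (a - 1 - 1)))
    (bound := fun r => exp (-r - k / 2 / r) * r ^ (a - 1 - 1)) (Ioi_mem_nhds (half_lt_self hk))
    (Eventually.of_forall fun t => by fun_prop) (integrableOn_exp_mul_rpow_of_pos a hk)
    (by fun_prop) ?_ (integrableOn_exp_mul_rpow_of_pos (a - 1) (half_pos hk)) ?_).2
  · filter_upwards [ae_restrict_mem measurableSet_Ioi] with r (hr : 0 < r) t (ht : k / 2 < t)
    rw [norm_neg, norm_of_nonneg (by positivity)]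
    gcongr
  · filter_upwards [ae_restrict_mem measurableSet_Ioi] with r (hr : 0 < r) t _
    have hexp := (((hasDerivAt_id t).div_const r).const_sub (-r)).exp.mul_const (r ^ (a - 1))
    refine hexp.congr_deriv ?_
    rw [rpow_sub_one hr.ne' (a - 1)]
    simp only [id]
    ring

end ExtendedGamma

section ExtendedGammaSq

variable {a : ℝ}

theorem lintegral_rpow_mul_exp_neg_mul {b : ℝ} (ha : 0 < a) (hb : 0 < b) :
    ∫⁻ r in Set.Ioi 0, ENNReal.ofReal (r ^ (a - 1) * exp (-(b * r))) =
      ENNReal.ofReal ((1 / b) ^ a * Gamma a) := by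
  have hint : IntegrableOn (fun r : ℝ => r ^ (a - 1) * exp (-(b * r))) (Set.Ioi 0) := by
    simpa using integrableOn_rpow_mul_exp_neg_mul_rpow (p := 1) (s := a - 1) (b := b)
      (by linarith) one_pos hb
  rw [← Real.integral_rpow_mul_exp_neg_mul_Ioi ha hb, ofReal_integral_eq_lintegral_ofReal hint]
  filter_upwards [ae_restrict_mem measurableSet_Ioi] with r (hr : 0 < r)
  positivity

theorem setLIntegral_Ioi_comp_const_add {F : ℝ → ℝ≥0∞} (r : ℝ) :
    ∫⁻ q in Set.Ioi 0, F (r + q) = ∫⁻ v in Set.Ioi r, F v := by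
  have h := (measurePreserving_add_left volume r).setLIntegral_comp_preimage_emb
    (measurableEmbedding_addLeft r) F (Set.Ioi r)
  simpa using h

theorem lintegral_lintegral_Ioi_comp_add {F : ℝ → ℝ≥0∞} (hF : Measurable F) :
    ∫⁻ r in Set.Ioi 0, ∫⁻ q in Set.Ioi 0, F (r + q) =
      ∫⁻ v in Set.Ioi 0, ENNReal.ofReal v * F v := by
  have hmeas : Measurable (Function.uncurry fun r v : ℝ => (Set.Ioi r).indicator F v) :=
    (hF.comp measurable_snd).indicator (measurableSet_lt measurable_fst measurable_snd)
  have hinner : ∀ v : ℝ, ∫⁻ r in Set.Ioi 0, (Set.Ioi r).indicator F v =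
      (Set.Ioi 0).indicator (fun v => ENNReal.ofReal v * F v) v := fun v => by
    calc ∫⁻ r in Set.Ioi 0, (Set.Ioi r).indicator F v
        = ∫⁻ r in Set.Ioi 0, (Set.Iio v).indicator (fun _ => F v) r := rfl
      _ = F v * ENNReal.ofReal v := by
          rw [lintegral_indicator_const measurableSet_Iio, Measure.restrict_apply measurableSet_Iio,
            Set.Iio_inter_Ioi, Real.volume_Ioo, sub_zero]
      _ = (Set.Ioi 0).indicator (fun v => ENNReal.ofReal v * F v) v := by
          rcases le_or_gt v 0 with hv | hv
          · simp [hv.not_gt, ENNReal.ofReal_of_nonpos hv]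
          · simp [hv, mul_comm]
  simp_rw [setLIntegral_Ioi_comp_const_add, ← lintegral_indicator measurableSet_Ioi F]
  rw [lintegral_lintegral_swap hmeas.aemeasurable, ← lintegral_indicator measurableSet_Ioi]
  exact lintegral_congr hinner

theorem lintegral_lintegral_exp_mul_rpow_add (ha : -1 < a) :
    ∫⁻ r in Set.Ioi 0, ∫⁻ q in Set.Ioi 0,
        ENNReal.ofReal (exp (-(r + q)) * (r + q) ^ (a - 1)) =
      ENNReal.ofReal (Gamma (1 + a)) := by
  have hGamma := lintegral_rpow_mul_exp_neg_mul (a := 1 + a) (by linarith) one_pos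
  rw [lintegral_lintegral_Ioi_comp_add
    (F := fun v => ENNReal.ofReal (exp (-v) * v ^ (a - 1))) (by fun_prop)]
  rw [div_one, one_rpow, one_mul] at hGamma
  rw [← hGamma]
  refine setLIntegral_congr_fun measurableSet_Ioi fun v (hv : 0 < v) => ?_
  rw [← ENNReal.ofReal_mul hv.le, one_mul, show 1 + a - 1 = a - 1 + 1 by ring,
    rpow_add_one hv.ne']
  congr 1
  ring

theorem lintegral_rpow_neg_mul_exp_mul_exp (ha : a < 1) {r q : ℝ} (hr : 0 < r) (hq : 0 < q) :
    ∫⁻ k in Set.Ioi 0, ENNReal.ofReal (k ^ (-a) *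
        (exp (-r - k / r) * r ^ (a - 1) * (exp (-q - k / q) * q ^ (a - 1)))) =
      ENNReal.ofReal (Gamma (1 - a)) *
        ENNReal.ofReal (exp (-(r + q)) * (r + q) ^ (a - 1)) := by
  have hexp : ∀ k, exp (-r - k / r) * exp (-q - k / q) =
      exp (-(r + q)) * exp (-((r + q) / (r * q) * k)) := fun k => by
    rw [← exp_add, ← exp_add]
    congr 1
    field_simp
    ring
  have hfactor : ∀ k, ENNReal.ofReal (k ^ (-a) *
      (exp (-r - k / r) * r ^ (a - 1) * (exp (-q - k / q) * q ^ (a - 1)))) =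
      ENNReal.ofReal (exp (-(r + q)) * (r * q) ^ (a - 1)) *
        ENNReal.ofReal (k ^ (1 - a - 1) * exp (-((r + q) / (r * q) * k))) := fun k => by
    rw [← ENNReal.ofReal_mul (by positivity), mul_rpow hr.le hq.le,
      show 1 - a - 1 = -a by ring]
    congr 1
    linear_combination k ^ (-a) * r ^ (a - 1) * q ^ (a - 1) * hexp k
  have hGamma : 0 ≤ Gamma (1 - a) := Real.Gamma_nonneg_of_nonneg (by linarith)
  simp_rw [hfactor]
  rw [lintegral_const_mul _ (by fun_prop),
    lintegral_rpow_mul_exp_neg_mul (by linarith) (by positivity),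
    ← ENNReal.ofReal_mul (by positivity), ← ENNReal.ofReal_mul hGamma, one_div,
    inv_rpow (by positivity), ← rpow_neg (by positivity), neg_sub,
    div_rpow (by positivity) (by positivity)]
  congr 1
  field_simp

theorem ofReal_mul_extGamma_sq {b k : ℝ} (a : ℝ) (hb : 0 ≤ b) (hk : 0 < k) :
    ENNReal.ofReal (b * extGamma a k ^ 2) =
      ∫⁻ r in Set.Ioi 0, ∫⁻ q in Set.Ioi 0, ENNReal.ofReal (b *
        (exp (-r - k / r) * r ^ (a - 1) * (exp (-q - k / q) * q ^ (a - 1)))) := by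
  rw [ENNReal.ofReal_mul hb, sq, ENNReal.ofReal_mul (extGamma_nonneg a k), extGamma,
    ofReal_integral_eq_lintegral_ofReal (integrableOn_exp_mul_rpow_of_pos a hk)
      (exp_mul_rpow_nonneg_ae_Ioi a k),
    ← lintegral_lintegral_mul (by fun_prop) (by fun_prop),
    ← lintegral_const_mul _ (Measurable.lintegral_prod_right (by fun_prop))]
  refine setLIntegral_congr_fun measurableSet_Ioi fun r (hr : 0 < r) => ?_
  rw [← lintegral_const_mul _ (by fun_prop)]
  refine lintegral_congr fun q => ?_
  rw [ENNReal.ofReal_mul hb, ENNReal.ofReal_mul (p := _ * _) (by positivity)]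

theorem lintegral_rpow_neg_mul_extGamma_sq (ha : a ∈ Set.Ioo (-1) 1) :
    ∫⁻ k in Set.Ioi 0, ENNReal.ofReal (k ^ (-a) * extGamma a k ^ 2) =
      ENNReal.ofReal (Gamma (1 - a) * Gamma (1 + a)) := by
  set T : ℝ → ℝ → ℝ → ℝ≥0∞ := fun k r q => ENNReal.ofReal (k ^ (-a) *
    (exp (-r - k / r) * r ^ (a - 1) * (exp (-q - k / q) * q ^ (a - 1))))
  have hTm : Measurable fun p : (ℝ × ℝ) × ℝ => T p.1.1 p.1.2 p.2 := by fun_prop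
  calc ∫⁻ k in Set.Ioi 0, ENNReal.ofReal (k ^ (-a) * extGamma a k ^ 2)
      = ∫⁻ k in Set.Ioi 0, ∫⁻ r in Set.Ioi 0, ∫⁻ q in Set.Ioi 0, T k r q :=
        setLIntegral_congr_fun measurableSet_Ioi fun k (hk : 0 < k) =>
          ofReal_mul_extGamma_sq a (by positivity) hk
    _ = ∫⁻ r in Set.Ioi 0, ∫⁻ k in Set.Ioi 0, ∫⁻ q in Set.Ioi 0, T k r q :=
        lintegral_lintegral_swap hTm.lintegral_prod_right'.aemeasurable
    _ = ∫⁻ r in Set.Ioi 0, ∫⁻ q in Set.Ioi 0, ∫⁻ k in Set.Ioi 0, T k r q :=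
        lintegral_congr fun r => lintegral_lintegral_swap
          (Measurable.aemeasurable (by fun_prop))
    _ = ∫⁻ r in Set.Ioi 0, ENNReal.ofReal (Gamma (1 - a)) * ∫⁻ q in Set.Ioi 0,
          ENNReal.ofReal (exp (-(r + q)) * (r + q) ^ (a - 1)) := by
        refine setLIntegral_congr_fun measurableSet_Ioi fun r hr => ?_
        rw [← lintegral_const_mul _ (by fun_prop)]
        exact setLIntegral_congr_fun measurableSet_Ioi fun q hq =>
          lintegral_rpow_neg_mul_exp_mul_exp ha.2 hr hq
    _ = ENNReal.ofReal (Gamma (1 - a) * Gamma (1 + a)) := by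
        rw [lintegral_const_mul' _ _ ENNReal.ofReal_ne_top,
          lintegral_lintegral_exp_mul_rpow_add ha.1,
          ENNReal.ofReal_mul (Real.Gamma_nonneg_of_nonneg (sub_nonneg.2 ha.2.le))]

theorem lintegral_Ioi_comp_mul_sq {c : ℝ} (hc : 0 < c) (g : ℝ → ℝ≥0∞) :
    ∫⁻ y in Set.Ioi 0, ENNReal.ofReal (2 * c * y) * g (c * y ^ 2) = ∫⁻ k in Set.Ioi 0, g k := by
  have himage : (fun y : ℝ => c * y ^ 2) '' Set.Ioi 0 = Set.Ioi (0 : ℝ) := by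
    refine Set.Subset.antisymm (Set.image_subset_iff.2 fun y (hy : (0 : ℝ) < y) => ?_)
      fun k (hk : 0 < k) => ?_
    · change 0 < c * y ^ 2
      positivity
    · have hkc : 0 < k / c := div_pos hk hc
      exact ⟨√(k / c), Real.sqrt_pos.2 hkc, by
        simp only [Real.sq_sqrt hkc.le]; field_simp⟩
  have hinj : Set.InjOn (fun y : ℝ => c * y ^ 2) (Set.Ioi 0) := fun y hy z hz h =>
    (sq_eq_sq₀ (Set.mem_Ioi.1 hy).le (Set.mem_Ioi.1 hz).le).1 (mul_left_cancel₀ hc.ne' h)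
  have hderiv : ∀ y ∈ Set.Ioi (0 : ℝ),
      HasDerivWithinAt (fun y => c * y ^ 2) (2 * c * y) (Set.Ioi 0) y := fun y _ => by
    refine (((hasDerivAt_pow 2 y).const_mul c).congr_deriv ?_).hasDerivWithinAt
    norm_num
    ring
  have hsubst := lintegral_image_eq_lintegral_abs_deriv_mul measurableSet_Ioi hderiv hinj g
  rw [himage] at hsubst
  rw [hsubst]
  refine setLIntegral_congr_fun measurableSet_Ioi fun y (hy : 0 < y) => ?_
  rw [abs_of_pos (by positivity)]

theorem lintegral_rpow_mul_extGamma_comp_mul_sq_sq (ha : a ∈ Set.Ioo (-1) 1) {c : ℝ}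
    (hc : 0 < c) :
    ∫⁻ y in Set.Ioi 0, ENNReal.ofReal (y ^ (1 - 2 * a) * extGamma a (c * y ^ 2) ^ 2) =
      ENNReal.ofReal (c ^ (a - 1) / 2 * (Gamma (1 - a) * Gamma (1 + a))) := by
  have hscale : ∀ y ∈ Set.Ioi (0 : ℝ),
      ENNReal.ofReal (y ^ (1 - 2 * a) * extGamma a (c * y ^ 2) ^ 2) =
      ENNReal.ofReal (2 * c * y) * (ENNReal.ofReal (c ^ (a - 1) / 2) *
        ENNReal.ofReal ((c * y ^ 2) ^ (-a) * extGamma a (c * y ^ 2) ^ 2)) := by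
    intro y (hy : 0 < y)
    rw [← ENNReal.ofReal_mul (by positivity), ← ENNReal.ofReal_mul (by positivity),
      mul_rpow hc.le (by positivity), ← rpow_natCast_mul hy.le, rpow_sub_one hc.ne',
      rpow_sub hy, rpow_one, rpow_neg hc.le, Nat.cast_ofNat, mul_neg, rpow_neg hy.le]
    congr 1
    field_simp
  rw [setLIntegral_congr_fun measurableSet_Ioi hscale, lintegral_Ioi_comp_mul_sq hc fun k =>
      ENNReal.ofReal (c ^ (a - 1) / 2) * ENNReal.ofReal (k ^ (-a) * extGamma a k ^ 2),
    lintegral_const_mul' _ _ ENNReal.ofReal_ne_top, lintegral_rpow_neg_mul_extGamma_sq ha,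
    ← ENNReal.ofReal_mul (by positivity)]

theorem lintegral_extGamma_energy {s c : ℝ} (hs : s ∈ Set.Ioo 0 1) (hc : 0 ≤ c) :
    ∫⁻ y in Set.Ioi 0, ENNReal.ofReal (y ^ (1 - 2 * s) *
        (4 * c * extGamma s (c * y ^ 2) ^ 2 +
          (2 * c * y * extGamma (s - 1) (c * y ^ 2)) ^ 2)) =
      ENNReal.ofReal (2 * c ^ s * (Gamma s * Gamma (1 - s))) := by
  obtain ⟨hs₀, hs₁⟩ := hs
  rcases hc.eq_or_lt with rfl | hc
  · simp [Real.zero_rpow hs₀.ne']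
  have hsplit : ∀ y ∈ Set.Ioi (0 : ℝ), ENNReal.ofReal (y ^ (1 - 2 * s) *
      (4 * c * extGamma s (c * y ^ 2) ^ 2 +
        (2 * c * y * extGamma (s - 1) (c * y ^ 2)) ^ 2)) =
      ENNReal.ofReal (4 * c) * ENNReal.ofReal (y ^ (1 - 2 * s) * extGamma s (c * y ^ 2) ^ 2) +
      ENNReal.ofReal (4 * c ^ 2) * ENNReal.ofReal
        (y ^ (1 - 2 * (s - 1)) * extGamma (s - 1) (c * y ^ 2) ^ 2) := by
    intro y (hy : 0 < y)
    rw [← ENNReal.ofReal_mul (by positivity), ← ENNReal.ofReal_mul (by positivity),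
      ← ENNReal.ofReal_add (by positivity) (by positivity),
      show 1 - 2 * (s - 1) = 1 - 2 * s + (2 : ℕ) by push_cast; ring, rpow_add_natCast hy.ne']
    congr 1
    ring
  have hGamma₁ : Gamma (1 + s) = s * Gamma s := by rw [add_comm, Real.Gamma_add_one hs₀.ne']
  have hGamma₂ : Gamma (1 - (s - 1)) = (1 - s) * Gamma (1 - s) := by
    rw [← Real.Gamma_add_one (by linarith)]
    ring_nf
  have hm := measurable_extGamma s
  rw [setLIntegral_congr_fun measurableSet_Ioi hsplit, lintegral_add_left (by fun_prop),
    lintegral_const_mul' _ _ ENNReal.ofReal_ne_top, lintegral_const_mul' _ _ ENNReal.ofReal_ne_top,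
    lintegral_rpow_mul_extGamma_comp_mul_sq_sq ⟨by linarith, hs₁⟩ hc,
    lintegral_rpow_mul_extGamma_comp_mul_sq_sq ⟨by linarith, by linarith⟩ hc, hGamma₁, hGamma₂,
    add_sub_cancel, ← ENNReal.ofReal_mul (by positivity), ← ENNReal.ofReal_mul (by positivity),
    ← ENNReal.ofReal_add (by positivity) (by positivity), rpow_sub_one hc.ne',
    rpow_sub_one hc.ne', rpow_sub_one hc.ne']
  congr 1
  field_simp
  ring

end ExtendedGammaSq

section FourierKernel

open scoped FourierTransform

variable {E F : Type*} [NormedAddCommGroup E] [InnerProductSpace ℝ E] [FiniteDimensional ℝ E]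
  [MeasurableSpace E] [BorelSpace E] [NormedAddCommGroup F] [NormedSpace ℂ F]

theorem fourier_integral_eq_integral_fourier {α : Type*} [MeasurableSpace α] {μ : Measure α}
    [SFinite μ] {f : E → α → F} (hf : Integrable (Function.uncurry f) (volume.prod μ)) (z : E) :
    𝓕 (fun x => ∫ r, f x r ∂μ) z = ∫ r, 𝓕 (fun x => f x r) z ∂μ := by
  have hchar : Integrable (fun p : E × α => 𝐞 (-⟪p.1, z⟫) • f p.1 p.2) (volume.prod μ) := by
    refine hf.norm.mono' (AEStronglyMeasurable.smul ?_ hf.aestronglyMeasurable)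
      (Eventually.of_forall fun p => (Circle.norm_smul _ _).le)
    have hcont : Continuous fun x : E => (𝐞 (-⟪x, z⟫) : ℂ) := by fun_prop
    exact (hcont.stronglyMeasurable.comp_measurable measurable_fst).aestronglyMeasurable
  simp_rw [Real.fourier_eq, Circle.smul_def, ← integral_smul, ← Circle.smul_def]
  exact integral_integral_swap hchar

theorem fourier_const_smul (a : ℂ) (f : E → F) : 𝓕 (a • f) = a • 𝓕 f :=
  VectorFourier.fourierIntegral_const_smul 𝐞 volume (innerₗ E) f a

theorem fourier_char_smul (ψ : E → F) (x v : E) :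
    𝓕 (fun ξ => 𝐞 (-⟪ξ, x⟫) • ψ ξ) v = 𝓕 ψ (x + v) := by
  simp_rw [Real.fourier_eq, smul_smul, ← AddChar.map_add_eq_mul, inner_add_right, neg_add_rev]

theorem integral_fourier_sub_smul_eq_fourier [CompleteSpace F] {ψ : E → ℂ} {u : E → F}
    (hψ : Integrable ψ) (hu : Integrable u) (x : E) :
    ∫ v, 𝓕 ψ (x - v) • u v = 𝓕 (fun ξ => ψ ξ • 𝓕⁻ u ξ) x := by
  have hψx : Integrable fun ξ => 𝐞 (-⟪ξ, x⟫) • ψ ξ := by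
    rwa [Real.fourierIntegral_convergent_iff]
  calc ∫ v, 𝓕 ψ (x - v) • u v = ∫ v, 𝓕 ψ (x + v) • u (-v) := by
        rw [← integral_neg_eq_self]
        simp only [sub_neg_eq_add]
    _ = ∫ v, 𝓕 (fun ξ => 𝐞 (-⟪ξ, x⟫) • ψ ξ) v • u (-v) := by simp_rw [fourier_char_smul]
    _ = ∫ ξ, (𝐞 (-⟪ξ, x⟫) • ψ ξ) • 𝓕 (fun v => u (-v)) ξ :=
        integral_fourier_smul_eq_integral_smul_fourier hψx hu.comp_neg
    _ = 𝓕 (fun ξ => ψ ξ • 𝓕⁻ u ξ) x := by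
        simp_rw [Real.fourierInv_eq_fourier_comp_neg u, Real.fourier_eq _ x, smul_assoc]

end FourierKernel

section PoissonKernel

open scoped FourierTransform

variable {s c : ℝ}

theorem exp_neg_sub_mul_div_mul_rpow (s c r t : ℝ) :
    exp (-r - c * t / r) * r ^ (s - 1) = exp (-r) * r ^ (s - 1) * exp (-(c / r) * t) := by
  rw [mul_right_comm, ← exp_add]
  congr 2
  ring

theorem exp_mul_rpow_mul_rpow_pi_div_div (s d : ℝ) {r : ℝ} (hc : 0 < c) (hr : 0 < r) :
    exp (-r) * r ^ (s - 1) * (π / (c / r)) ^ d =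
      (π / c) ^ d * (exp (-r) * r ^ (s + d - 1)) := by
  rw [show π / (c / r) = π / c * r by field_simp, mul_rpow (by positivity) hr.le,
    show s + d - 1 = s - 1 + d by ring, rpow_add hr]
  ring

variable {E : Type*} [NormedAddCommGroup E] [InnerProductSpace ℝ E] [FiniteDimensional ℝ E]
  [MeasurableSpace E] [BorelSpace E]

theorem integrable_exp_neg_mul_norm_sq {b : ℝ} (hb : 0 < b) :
    Integrable fun v : E => exp (-b * ‖v‖ ^ 2) := by
  have h := (GaussianFourier.integrable_cexp_neg_mul_sq_norm_add (V := E) (b := (b : ℂ))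
    (by simpa using hb) 0 0).norm
  refine h.congr (Eventually.of_forall fun v => ?_)
  simp [Complex.norm_exp, ← Complex.ofReal_pow]

theorem integrable_prod_exp_mul_rpow (hs : 0 < s) (hc : 0 < c) :
    Integrable (fun p : E × ℝ => exp (-p.2 - c * ‖p.1‖ ^ 2 / p.2) * p.2 ^ (s - 1))
      (volume.prod (volume.restrict (Set.Ioi 0))) := by
  rw [integrable_prod_iff' (by fun_prop)]
  constructor
  · filter_upwards [ae_restrict_mem measurableSet_Ioi] with r (hr : 0 < r)
    simp only [exp_neg_sub_mul_div_mul_rpow]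
    exact (integrable_exp_neg_mul_norm_sq (by positivity)).const_mul _
  · refine ((Real.GammaIntegral_convergent (s := s + Module.finrank ℝ E / 2)
      (by positivity)).const_mul ((π / c) ^ (Module.finrank ℝ E / 2 : ℝ))).congr ?_
    filter_upwards [ae_restrict_mem measurableSet_Ioi] with r (hr : 0 < r)
    have hnorm : ∀ x : E, ‖exp (-r - c * ‖x‖ ^ 2 / r) * r ^ (s - 1)‖ =
        exp (-r) * r ^ (s - 1) * exp (-(c / r) * ‖x‖ ^ 2) := fun x => by
      rw [norm_of_nonneg (by positivity), exp_neg_sub_mul_div_mul_rpow]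
    simp only [hnorm]
    rw [integral_const_mul, GaussianFourier.integral_rexp_neg_mul_sq_norm (by positivity),
      exp_mul_rpow_mul_rpow_pi_div_div _ _ hc hr]

theorem integrable_extGamma_mul_norm_sq (hs : 0 < s) (hc : 0 < c) :
    Integrable fun x : E => extGamma s (c * ‖x‖ ^ 2) :=
  (integrable_prod_exp_mul_rpow hs hc).integral_prod_left

theorem fourier_exp_mul_rpow {r : ℝ} (hc : 0 < c) (hr : 0 < r) (z : E) :
    𝓕 (fun x : E => ((exp (-r - c * ‖x‖ ^ 2 / r) * r ^ (s - 1) : ℝ) : ℂ)) z =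
      (((π / c) ^ (Module.finrank ℝ E / 2 : ℝ) * (r ^ (s + Module.finrank ℝ E / 2 - 1) *
        exp (-((1 + π ^ 2 * ‖z‖ ^ 2 / c) * r))) : ℝ) : ℂ) := by
  have hgauss : 𝓕 (fun x : E => ((exp (-(c / r) * ‖x‖ ^ 2) : ℝ) : ℂ)) z =
      (((π / (c / r)) ^ (Module.finrank ℝ E / 2 : ℝ) *
        exp (-π ^ 2 * ‖z‖ ^ 2 / (c / r)) : ℝ) : ℂ) := by
    have h := fourier_gaussian_innerProductSpace (V := E) (b := ((c / r : ℝ) : ℂ))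
      (by rw [Complex.ofReal_re]; positivity) z
    push_cast [Complex.ofReal_cpow (show 0 ≤ π / (c / r) by positivity)] at h ⊢
    exact h
  have hscale : (fun x : E => ((exp (-r - c * ‖x‖ ^ 2 / r) * r ^ (s - 1) : ℝ) : ℂ)) =
      ((exp (-r) * r ^ (s - 1) : ℝ) : ℂ) • fun x : E => ((exp (-(c / r) * ‖x‖ ^ 2) : ℝ) : ℂ) := by
    ext x
    rw [exp_neg_sub_mul_div_mul_rpow, Complex.ofReal_mul, Pi.smul_apply, smul_eq_mul]
  have hexp : exp (-((1 + π ^ 2 * ‖z‖ ^ 2 / c) * r)) =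
      exp (-r) * exp (-π ^ 2 * ‖z‖ ^ 2 / (c / r)) := by
    rw [← exp_add]
    congr 1
    field_simp
    ring
  rw [hscale, fourier_const_smul, Pi.smul_apply, hgauss, smul_eq_mul,
    ← Complex.ofReal_mul, ← mul_assoc, exp_mul_rpow_mul_rpow_pi_div_div _ _ hc hr, hexp]
  congr 1
  ring

theorem fourier_extGamma_mul_norm_sq (hs : 0 < s) (hc : 0 < c) (z : E) :
    𝓕 (fun x : E => (extGamma s (c * ‖x‖ ^ 2) : ℂ)) z =
      (((π / c) ^ (Module.finrank ℝ E / 2 : ℝ) * (Gamma (s + Module.finrank ℝ E / 2) *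
        (1 + π ^ 2 * ‖z‖ ^ 2 / c) ^ (-(s + Module.finrank ℝ E / 2 : ℝ))) : ℝ) : ℂ) := by
  have hbase : 0 < 1 + π ^ 2 * ‖z‖ ^ 2 / c := by positivity
  simp_rw [extGamma, ← integral_complex_ofReal]
  rw [fourier_integral_eq_integral_fourier (integrable_prod_exp_mul_rpow hs hc).ofReal z,
    setIntegral_congr_fun measurableSet_Ioi fun r hr => fourier_exp_mul_rpow hc hr z,
    integral_complex_ofReal, integral_const_mul,
    Real.integral_rpow_mul_exp_neg_mul_Ioi (by positivity) hbase, one_div,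
    inv_rpow hbase.le, ← rpow_neg hbase.le, mul_comm (Gamma _)]

theorem integral_one_add_norm_sq_rpow (hs : 0 < s) :
    ∫ z : E, (1 + ‖z‖ ^ 2) ^ (-(s + Module.finrank ℝ E / 2 : ℝ)) =
      π ^ (Module.finrank ℝ E / 2 : ℝ) * Gamma s / Gamma (s + Module.finrank ℝ E / 2) := by
  set d : ℝ := Module.finrank ℝ E / 2 with hd
  set f : E → ℂ := fun x => (extGamma s (π ^ 2 * ‖x‖ ^ 2) : ℂ) with hf
  have hfourier : 𝓕 f = fun z =>
      ((π ^ (-d) * Gamma (s + d) * (1 + ‖z‖ ^ 2) ^ (-(s + d)) : ℝ) : ℂ) := by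
    ext z
    rw [hf, fourier_extGamma_mul_norm_sq hs (by positivity), mul_div_cancel_left₀ _ (by positivity),
      show π / π ^ 2 = π⁻¹ by field_simp, inv_rpow pi_pos.le, ← rpow_neg pi_pos.le, mul_assoc]
  have hcont : Continuous f := Complex.continuous_ofReal.comp
    ((continuousOn_extGamma hs).comp_continuous (by fun_prop) fun x =>
      Set.mem_Ici.2 (by positivity))
  have hint : Integrable (𝓕 f) := by
    rw [hfourier]
    have h := integrable_rpow_neg_one_add_norm_sq (E := E) (μ := volume) (r := 2 * (s + d))
      (by rw [hd]; linarith)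
    simp only [show -(2 * (s + d)) / 2 = -(s + d) by ring] at h
    exact (h.const_mul _).ofReal
  have hinv : 𝓕⁻ (𝓕 f) 0 = f 0 := by
    rw [hcont.fourierInv_fourier_eq
      (integrable_extGamma_mul_norm_sq hs (by positivity)).ofReal hint]
  have hmass : π ^ (-d) * Gamma (s + d) * ∫ z : E, (1 + ‖z‖ ^ 2) ^ (-(s + d)) = Gamma s := by
    rw [Real.fourierInv_eq', hfourier] at hinv
    simpa [hf, extGamma_zero hs, integral_complex_ofReal, integral_const_mul, ← Complex.ofReal_mul,
      -Complex.ofReal_mul] using hinv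
  have hGamma : 0 < Gamma (s + d) := Real.Gamma_pos_of_pos (by positivity)
  rw [← hmass, rpow_neg pi_pos.le]
  field_simp

end PoissonKernel

section RapidDecay

variable {ι E F : Type*} [NormedAddCommGroup E] [NormedAddCommGroup F]

/-- Rapid decay, faster than every power of `1 / ‖ξ‖`, of the members `f t` with `t ∈ S` of a family
of functions, uniformly over `S`. This is what the multipliers of the extension satisfy away from
the boundary `y = 0`, and it makes all frequency integrals converge. -/
def RapidDecayOn (S : Set ι) (f : ι → E → F) : Prop :=
  ∀ N : ℕ, ∃ C : ℝ, ∀ t ∈ S, ∀ ξ, ‖ξ‖ ^ N * ‖f t ξ‖ ≤ C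

namespace RapidDecayOn

variable {S : Set ι} {f : ι → E → F} {t : ι}

theorem of_norm_sq_pow (h : ∀ N : ℕ, ∃ C : ℝ, ∀ t ∈ S, ∀ ξ, (‖ξ‖ ^ 2) ^ N * ‖f t ξ‖ ≤ C) :
    RapidDecayOn S f := fun N => by
  obtain ⟨C₀, hC₀⟩ := h 0
  obtain ⟨C, hC⟩ := h N
  refine ⟨C₀ + C, fun t ht ξ => ?_⟩
  have hpow : ‖ξ‖ ^ N ≤ 1 + (‖ξ‖ ^ 2) ^ N := by
    rw [pow_right_comm]
    nlinarith [sq_nonneg (‖ξ‖ ^ N - 1)]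
  calc ‖ξ‖ ^ N * ‖f t ξ‖ ≤ (1 + (‖ξ‖ ^ 2) ^ N) * ‖f t ξ‖ := by gcongr
    _ = (‖ξ‖ ^ 2) ^ 0 * ‖f t ξ‖ + (‖ξ‖ ^ 2) ^ N * ‖f t ξ‖ := by ring
    _ ≤ C₀ + C := add_le_add (hC₀ t ht ξ) (hC t ht ξ)

theorem exists_norm_le (hf : RapidDecayOn S f) : ∃ C : ℝ, ∀ t ∈ S, ∀ ξ, ‖f t ξ‖ ≤ C := by
  simpa only [pow_zero, one_mul] using hf 0

theorem smul_of_norm_le {𝕜 : Type*} [NormedField 𝕜] [NormedSpace 𝕜 F] {m : ι → E → 𝕜} {v : E → F}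
    (hm : RapidDecayOn S m) {B : ℝ} (hv : ∀ ξ, ‖v ξ‖ ≤ B) :
    RapidDecayOn S fun t ξ => m t ξ • v ξ := fun N => by
  obtain ⟨C, hC⟩ := hm N
  refine ⟨C * B, fun t ht ξ => ?_⟩
  calc ‖ξ‖ ^ N * ‖m t ξ • v ξ‖ = ‖ξ‖ ^ N * ‖m t ξ‖ * ‖v ξ‖ := by rw [norm_smul, mul_assoc]
    _ ≤ C * B := mul_le_mul (hC t ht ξ) (hv ξ) (norm_nonneg _) ((by positivity : (0 : ℝ) ≤ _).trans
        (hC t ht ξ))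

variable [NormedSpace ℝ E] [FiniteDimensional ℝ E] [MeasurableSpace E] [BorelSpace E]
  {μ : Measure E} [μ.IsAddHaarMeasure]

theorem integrable_norm_pow_mul_norm (hf : RapidDecayOn S f) (ht : t ∈ S)
    (hft : AEStronglyMeasurable (f t) μ) (k : ℕ) : Integrable (fun ξ => ‖ξ‖ ^ k * ‖f t ξ‖) μ := by
  obtain ⟨C₁, hC₁⟩ := hf.exists_norm_le
  obtain ⟨C₂, hC₂⟩ := hf (k + μ.integrablePower)
  exact integrable_of_le_of_pow_mul_le (hC₁ t ht) (hC₂ t ht) hft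

theorem integrable (hf : RapidDecayOn S f) (ht : t ∈ S) (hft : AEStronglyMeasurable (f t) μ) :
    Integrable (f t) μ := by
  rw [← integrable_norm_iff hft]
  simpa only [pow_zero, one_mul] using hf.integrable_norm_pow_mul_norm ht hft 0

theorem memLp_two_norm_pow_mul_norm (hf : RapidDecayOn S f) (ht : t ∈ S)
    (hft : AEStronglyMeasurable (f t) μ) (k : ℕ) : MemLp (fun ξ => ‖ξ‖ ^ k * ‖f t ξ‖) 2 μ := by
  have hint := hf.integrable_norm_pow_mul_norm ht hft k
  obtain ⟨C, hC⟩ := hf k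
  rw [memLp_two_iff_integrable_sq hint.aestronglyMeasurable]
  refine (hint.mul_const C).mono' (hint.aestronglyMeasurable.pow 2)
    (Eventually.of_forall fun ξ => ?_)
  rw [norm_of_nonneg (by positivity), sq]
  exact mul_le_mul_of_nonneg_left (hC t ht ξ) (by positivity)

theorem memLp_two (hf : RapidDecayOn S f) (ht : t ∈ S) (hft : AEStronglyMeasurable (f t) μ) :
    MemLp (f t) 2 μ := by
  rw [← memLp_norm_iff hft]
  simpa only [pow_zero, one_mul] using hf.memLp_two_norm_pow_mul_norm ht hft 0

theorem exists_integrable_bound (μ : Measure E) [μ.IsAddHaarMeasure] (hf : RapidDecayOn S f) :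
    ∃ G : E → ℝ, Integrable G μ ∧ ∀ t ∈ S, ∀ ξ, ‖f t ξ‖ ≤ G ξ := by
  obtain ⟨C₁, hC₁⟩ := hf.exists_norm_le
  obtain ⟨C₂, hC₂⟩ := hf (0 + μ.integrablePower)
  refine ⟨_, (Measure.integrable_pow_neg_integrablePower μ).const_mul
    (2 ^ μ.integrablePower * (C₁ + C₂)), fun t ht ξ => ?_⟩
  simpa only [pow_zero, one_mul] using
    pow_mul_le_of_le_of_pow_mul_le (norm_nonneg ξ) (norm_nonneg _) (hC₁ t ht ξ) (hC₂ t ht ξ)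

end RapidDecayOn

end RapidDecay

section FourierDerivatives

open scoped FourierTransform

theorem ofReal_fderiv_apply {V : Type*} [NormedAddCommGroup V] [NormedSpace ℝ V] {f : V → ℝ}
    {L : V →L[ℝ] ℂ} {x : V} (hf : HasFDerivAt (fun x => (f x : ℂ)) L x) (e : V) :
    (fderiv ℝ f x e : ℂ) = L e := by
  have hre : HasFDerivAt f (Complex.reCLM.comp L) x := Complex.reCLM.hasFDerivAt.comp x hf
  have hof : HasFDerivAt (fun x => (f x : ℂ)) (Complex.ofRealCLM.comp (fderiv ℝ f x)) x :=
    Complex.ofRealCLM.hasFDerivAt.comp x hre.differentiableAt.hasFDerivAt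
  exact congrArg (fun L => L e) (hof.unique hf)

theorem ofReal_deriv {f : ℝ → ℝ} {f' : ℂ} {y : ℝ} (hf : HasDerivAt (fun t => (f t : ℂ)) f' y) :
    ((deriv f y : ℝ) : ℂ) = f' := by
  simpa using ofReal_fderiv_apply hf.hasFDerivAt 1

variable {E F : Type*} [NormedAddCommGroup E] [InnerProductSpace ℝ E] [FiniteDimensional ℝ E]
  [MeasurableSpace E] [BorelSpace E] [NormedAddCommGroup F] [NormedSpace ℂ F]

theorem hasDerivAt_fourier_of_dominated {f f' : ℝ → E → F} {S : Set ℝ} {y : ℝ} {G : E → ℝ}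
    (hS : S ∈ nhds y) (hf : ∀ t, AEStronglyMeasurable (f t)) (hfy : Integrable (f y))
    (hf' : AEStronglyMeasurable (f' y)) (hG : Integrable G) (hle : ∀ t ∈ S, ∀ ξ, ‖f' t ξ‖ ≤ G ξ)
    (hderiv : ∀ t ∈ S, ∀ ξ, HasDerivAt (f · ξ) (f' t ξ) t) (x : E) :
    HasDerivAt (fun t => 𝓕 (f t) x) (𝓕 (f' y) x) y := by
  simp_rw [Real.fourier_eq]
  have hchar : Continuous fun ξ : E => 𝐞 (-⟪ξ, x⟫) := by fun_prop
  refine (hasDerivAt_integral_of_dominated_loc_of_deriv_le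
    (F := fun t ξ => 𝐞 (-⟪ξ, x⟫) • f t ξ) (F' := fun t ξ => 𝐞 (-⟪ξ, x⟫) • f' t ξ) hS
    (Eventually.of_forall fun t => hchar.aestronglyMeasurable.smul (hf t))
    (by rwa [Real.fourierIntegral_convergent_iff]) (hchar.aestronglyMeasurable.smul hf')
    (Eventually.of_forall fun ξ t ht => ?_) hG (Eventually.of_forall fun ξ t ht => ?_)).2
  · rw [Circle.norm_smul]
    exact hle t ht ξ
  · exact (hderiv t ht ξ).const_smul (𝐞 (-⟪ξ, x⟫))

variable {f : E → ℝ} {h : E → ℂ}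

theorem fderiv_apply_of_eq_fourier (hf : ∀ x, (f x : ℂ) = 𝓕 h x) (h₁ : Integrable h)
    (h₂ : Integrable fun ξ => ‖ξ‖ * ‖h ξ‖) (x e : E) :
    (fderiv ℝ f x e : ℂ) = 𝓕 (fun ξ => -(2 * π * Complex.I) * (⟪ξ, e⟫ * h ξ)) x := by
  have hD := Real.hasFDerivAt_fourier h₁ h₂ x
  simp_rw [funext fun x => (hf x).symm] at hD
  have hint : Integrable (VectorFourier.fourierSMulRight (innerSL ℝ) h) := by
    refine (h₂.const_mul (2 * π * ‖(innerSL ℝ : E →L[ℝ] E →L[ℝ] ℝ)‖)).mono'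
      h₁.aestronglyMeasurable.fourierSMulRight (Eventually.of_forall fun ξ => ?_)
    exact (VectorFourier.norm_fourierSMulRight_le _ _ _).trans_eq (by ring)
  rw [ofReal_fderiv_apply hD, Real.fourier_continuousLinearMap_apply hint]
  congr 1 with ξ

theorem integral_fderiv_apply_sq_of_eq_fourier (hf : ∀ x, (f x : ℂ) = 𝓕 h x) (h₁ : Integrable h)
    (h₂ : Integrable fun ξ => ‖ξ‖ * ‖h ξ‖) (h₃ : MemLp (fun ξ => ‖ξ‖ * ‖h ξ‖) 2) (e : E) :
    Integrable (fun x => (fderiv ℝ f x e) ^ 2) ∧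
      Integrable (fun ξ => 4 * π ^ 2 * (‖⟪ξ, e⟫‖ ^ 2 * ‖h ξ‖ ^ 2)) ∧
      ∫ x, (fderiv ℝ f x e) ^ 2 = ∫ ξ, 4 * π ^ 2 * (‖⟪ξ, e⟫‖ ^ 2 * ‖h ξ‖ ^ 2) := by
  set g : E → ℂ := fun ξ => -(2 * π * Complex.I) * (⟪ξ, e⟫ * h ξ) with hg
  have hgm : AEStronglyMeasurable g := by
    have := h₁.aestronglyMeasurable
    fun_prop
  have hgn : ∀ ξ, ‖g ξ‖ = 2 * π * (‖⟪ξ, e⟫‖ * ‖h ξ‖) := fun ξ => by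
    simp [hg, abs_of_pos pi_pos]
  have hgle : ∀ ξ, ‖g ξ‖ ≤ 2 * π * ‖e‖ * (‖ξ‖ * ‖h ξ‖) := fun ξ => by
    rw [hgn]
    calc 2 * π * (‖⟪ξ, e⟫‖ * ‖h ξ‖) ≤ 2 * π * (‖ξ‖ * ‖e‖ * ‖h ξ‖) := by
          gcongr
          exact norm_inner_le_norm ξ e
      _ = 2 * π * ‖e‖ * (‖ξ‖ * ‖h ξ‖) := by ring
  have hg₁ : Integrable g := (h₂.const_mul _).mono' hgm (Eventually.of_forall hgle)
  have hg₂ : MemLp g 2 := (h₃.const_mul _).mono hgm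
    (Eventually.of_forall fun ξ => (hgle ξ).trans (Real.le_norm_self _))
  have hfderiv : ∀ x, (fderiv ℝ f x e) ^ 2 = ‖𝓕 g x‖ ^ 2 := fun x => by
    rw [← fderiv_apply_of_eq_fourier hf h₁ h₂ x e, Complex.norm_real, norm_eq_abs, sq_abs]
  have hsq : ∀ ξ, 4 * π ^ 2 * (‖⟪ξ, e⟫‖ ^ 2 * ‖h ξ‖ ^ 2) = ‖g ξ‖ ^ 2 := fun ξ => by
    rw [hgn]
    ring
  simp_rw [hfderiv, hsq]
  exact ⟨(memLp_fourier hg₁ hg₂).integrable_norm_pow two_ne_zero,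
    hg₂.integrable_norm_pow two_ne_zero, integral_norm_sq_fourier hg₁ hg₂⟩

theorem integral_norm_fderiv_sq_of_eq_fourier (hf : ∀ x, (f x : ℂ) = 𝓕 h x) (h₁ : Integrable h)
    (h₂ : Integrable fun ξ => ‖ξ‖ * ‖h ξ‖) (h₃ : MemLp (fun ξ => ‖ξ‖ * ‖h ξ‖) 2) :
    Integrable (fun x => ‖fderiv ℝ f x‖ ^ 2) ∧
      ∫ x, ‖fderiv ℝ f x‖ ^ 2 = ∫ ξ, 4 * π ^ 2 * ‖ξ‖ ^ 2 * ‖h ξ‖ ^ 2 := by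
  let b := stdOrthonormalBasis ℝ E
  have hcoord := fun i => integral_fderiv_apply_sq_of_eq_fourier hf h₁ h₂ h₃ (b i)
  have hsum : ∀ ξ, 4 * π ^ 2 * ‖ξ‖ ^ 2 * ‖h ξ‖ ^ 2 =
      ∑ i, 4 * π ^ 2 * (‖⟪ξ, b i⟫‖ ^ 2 * ‖h ξ‖ ^ 2) := fun ξ => by
    rw [← b.sum_sq_norm_inner_left ξ, ← Finset.mul_sum, ← Finset.sum_mul, mul_assoc]
  simp_rw [b.norm_dual, hsum]
  refine ⟨integrable_finsetSum _ fun i _ => (hcoord i).1, ?_⟩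
  rw [integral_finsetSum _ fun i _ => (hcoord i).1, integral_finsetSum _ fun i _ => (hcoord i).2.1]
  exact Finset.sum_congr rfl fun i _ => (hcoord i).2.2

end FourierDerivatives

section Symbol

variable {E : Type*} [NormedAddCommGroup E] {s y : ℝ}

/-- The Fourier symbol, in the convention `𝓕 u ξ = ∫ e^{-2πi⟨x,ξ⟩} u x dx`, of the map sending `u`
to the slice at height `y` of its normalized Caffarelli–Silvestre extension of order `s`. -/
noncomputable def csSymbol (s y : ℝ) (ξ : E) : ℝ :=
  extGamma s (π ^ 2 * ‖ξ‖ ^ 2 * y ^ 2) / Gamma s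

/-- The derivative of `csSymbol s y ξ` with respect to the height `y > 0`. -/
noncomputable def csSymbolDeriv (s y : ℝ) (ξ : E) : ℝ :=
  -(2 * (π ^ 2 * ‖ξ‖ ^ 2) * y * extGamma (s - 1) (π ^ 2 * ‖ξ‖ ^ 2 * y ^ 2)) / Gamma s

theorem hasDerivAt_csSymbol (s : ℝ) (hy : 0 < y) (ξ : E) :
    HasDerivAt (fun t => csSymbol s t ξ) (csSymbolDeriv s y ξ) y := by
  refine HasDerivAt.div_const ?_ _
  rcases eq_or_ne ξ 0 with rfl | hξ
  · simpa using hasDerivAt_const y (extGamma s 0)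
  have hsq : HasDerivAt (fun t : ℝ => π ^ 2 * ‖ξ‖ ^ 2 * t ^ 2) (2 * (π ^ 2 * ‖ξ‖ ^ 2) * y) y :=
    ((hasDerivAt_pow 2 y).const_mul (π ^ 2 * ‖ξ‖ ^ 2)).congr_deriv (by norm_num; ring)
  exact ((hasDerivAt_extGamma s (by positivity)).comp y hsq).congr_deriv (by ring)

theorem norm_sq_pow_mul_norm_csSymbol_le (hs : 0 < s) (hy : 0 < y) {t : ℝ} (ht : y ≤ t) (N : ℕ)
    (ξ : E) :
    (‖ξ‖ ^ 2) ^ N * ‖csSymbol s t ξ‖ ≤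
      N.factorial * Gamma (s + N) / (π ^ 2 * y ^ 2) ^ N / Gamma s := by
  have hGamma : 0 < Gamma s := Real.Gamma_pos_of_pos hs
  have hnn := extGamma_nonneg s (π ^ 2 * ‖ξ‖ ^ 2 * t ^ 2)
  rw [csSymbol, norm_div, norm_of_nonneg hnn, norm_of_nonneg hGamma.le, ← mul_div_assoc]
  gcongr
  rw [le_div_iff₀ (by positivity)]
  calc (‖ξ‖ ^ 2) ^ N * extGamma s (π ^ 2 * ‖ξ‖ ^ 2 * t ^ 2) * (π ^ 2 * y ^ 2) ^ N
      = (π ^ 2 * ‖ξ‖ ^ 2 * y ^ 2) ^ N * extGamma s (π ^ 2 * ‖ξ‖ ^ 2 * t ^ 2) := by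
        simp only [mul_pow]
        ring
    _ ≤ (π ^ 2 * ‖ξ‖ ^ 2 * t ^ 2) ^ N * extGamma s (π ^ 2 * ‖ξ‖ ^ 2 * t ^ 2) := by gcongr
    _ ≤ N.factorial * Gamma (s + N) := pow_mul_extGamma_le (by positivity) N (by positivity)

theorem norm_sq_pow_mul_norm_csSymbolDeriv_le (hs : 0 < s) (hy : 0 < y) {t : ℝ} (ht : y ≤ t)
    (N : ℕ) (ξ : E) :
    (‖ξ‖ ^ 2) ^ N * ‖csSymbolDeriv s t ξ‖ ≤
      2 / y * ((N + 1).factorial * Gamma (s + N)) / (π ^ 2 * y ^ 2) ^ N / Gamma s := by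
  have hGamma : 0 < Gamma s := Real.Gamma_pos_of_pos hs
  have ht₀ : 0 < t := hy.trans_le ht
  set k := π ^ 2 * ‖ξ‖ ^ 2 * t ^ 2 with hk
  have hnn := extGamma_nonneg (s - 1) k
  have hdecay : k ^ (N + 1) * extGamma (s - 1) k ≤ (N + 1).factorial * Gamma (s + N) := by
    have hexp : s - 1 + ((N + 1 : ℕ) : ℝ) = s + N := by push_cast; ring
    rw [← hexp]
    exact pow_mul_extGamma_le (by positivity) (N + 1) (by rw [hexp]; positivity)
  rw [csSymbolDeriv, norm_div, norm_neg, norm_of_nonneg (by positivity), norm_of_nonneg hGamma.le,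
    ← mul_div_assoc]
  have hyt : π ^ 2 * ‖ξ‖ ^ 2 * y ^ 2 ≤ k := by
    rw [hk]
    gcongr
  gcongr
  rw [le_div_iff₀ (by positivity)]
  calc (‖ξ‖ ^ 2) ^ N * (2 * (π ^ 2 * ‖ξ‖ ^ 2) * t * extGamma (s - 1) k) * (π ^ 2 * y ^ 2) ^ N
      = 2 / t * ((π ^ 2 * ‖ξ‖ ^ 2 * y ^ 2) ^ N * k * extGamma (s - 1) k) := by
        simp only [hk, mul_pow]
        field_simp
    _ ≤ 2 / y * (k ^ N * k * extGamma (s - 1) k) := by gcongr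
    _ = 2 / y * (k ^ (N + 1) * extGamma (s - 1) k) := by rw [pow_succ]
    _ ≤ 2 / y * ((N + 1).factorial * Gamma (s + N)) := by gcongr

theorem rapidDecayOn_csSymbol (hs : 0 < s) (hy : 0 < y) :
    RapidDecayOn (Set.Ici y) (csSymbol s : ℝ → E → ℝ) :=
  .of_norm_sq_pow fun N => ⟨_, fun _ ht ξ => norm_sq_pow_mul_norm_csSymbol_le hs hy ht N ξ⟩

theorem rapidDecayOn_csSymbolDeriv (hs : 0 < s) (hy : 0 < y) :
    RapidDecayOn (Set.Ici y) (csSymbolDeriv s : ℝ → E → ℝ) :=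
  .of_norm_sq_pow fun N => ⟨_, fun _ ht ξ => norm_sq_pow_mul_norm_csSymbolDeriv_le hs hy ht N ξ⟩

variable [MeasurableSpace E] [BorelSpace E]

theorem measurable_uncurry_csSymbol (s : ℝ) :
    Measurable (Function.uncurry (csSymbol s : ℝ → E → ℝ)) := by
  have hm := measurable_extGamma s
  unfold Function.uncurry csSymbol
  fun_prop

theorem measurable_uncurry_csSymbolDeriv (s : ℝ) :
    Measurable (Function.uncurry (csSymbolDeriv s : ℝ → E → ℝ)) := by
  have hm := measurable_extGamma (s - 1)
  unfold Function.uncurry csSymbolDeriv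
  fun_prop

end Symbol

section Extension

open scoped FourierTransform

variable {E : Type*} [NormedAddCommGroup E] [InnerProductSpace ℝ E] [FiniteDimensional ℝ E]
  [MeasurableSpace E] [BorelSpace E] {s y : ℝ}

/-- The normalized Caffarelli–Silvestre extension of order `s` of `u`, at height `y` above `x`. -/
noncomputable def csExtension (s : ℝ) (u : E → ℝ) (x : E) (y : ℝ) : ℝ :=
  (1 / ∫ z : E, (‖z‖ ^ 2 + 1) ^ (-((Module.finrank ℝ E : ℝ) + 2 * s) / 2)) *
    ∫ ξ, y ^ (2 * s) * u ξ * (‖x - ξ‖ ^ 2 + y ^ 2) ^ (-((Module.finrank ℝ E : ℝ) + 2 * s) / 2)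

theorem fourier_csSymbol (hs : 0 < s) (hy : 0 < y) (z : E) :
    𝓕 (fun ξ : E => (csSymbol s y ξ : ℂ)) z =
      ((1 / (∫ z : E, (‖z‖ ^ 2 + 1) ^ (-((Module.finrank ℝ E : ℝ) + 2 * s) / 2)) *
        (y ^ (2 * s) * (‖z‖ ^ 2 + y ^ 2) ^ (-((Module.finrank ℝ E : ℝ) + 2 * s) / 2)) : ℝ) :
        ℂ) := by
  set d : ℝ := Module.finrank ℝ E / 2 with hd
  have hsymbol : (fun ξ : E => (csSymbol s y ξ : ℂ)) =
      (((Gamma s)⁻¹ : ℝ) : ℂ) • fun ξ : E => (extGamma s (π ^ 2 * y ^ 2 * ‖ξ‖ ^ 2) : ℂ) := by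
    ext ξ
    rw [csSymbol, Pi.smul_apply, smul_eq_mul, ← Complex.ofReal_mul, div_eq_inv_mul, mul_right_comm]
  have hscale : π / (π ^ 2 * y ^ 2) = π⁻¹ * y ^ (-2 : ℝ) := by
    rw [rpow_neg hy.le, rpow_two]
    field_simp
  have hbase : 1 + π ^ 2 * ‖z‖ ^ 2 / (π ^ 2 * y ^ 2) = (‖z‖ ^ 2 + y ^ 2) * y ^ (-2 : ℝ) := by
    rw [rpow_neg hy.le, rpow_two]
    field_simp
    ring
  have hexp : -((Module.finrank ℝ E : ℝ) + 2 * s) / 2 = -(s + d) := by rw [hd]; ring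
  have hy_pow : y ^ (-2 * d) * y ^ (-2 * -(s + d)) = y ^ (2 * s) := by
    rw [← rpow_add hy]
    ring_nf
  simp_rw [hexp, add_comm _ (1 : ℝ)]
  rw [hsymbol, fourier_const_smul, Pi.smul_apply, smul_eq_mul,
    fourier_extGamma_mul_norm_sq hs (by positivity), ← hd, ← Complex.ofReal_mul, hscale, hbase,
    integral_one_add_norm_sq_rpow hs, ← hd, mul_rpow (by positivity) (by positivity),
    mul_rpow (by positivity) (by positivity), ← rpow_mul hy.le, ← rpow_mul hy.le, ← hy_pow,
    inv_rpow pi_pos.le]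
  congr 1
  field_simp

theorem csExtension_eq_fourier (hs : 0 < s) (hy : 0 < y) {u : E → ℝ} (hu : Integrable u) (x : E) :
    (csExtension s u x y : ℂ) =
      𝓕 (fun ξ => csSymbol s y ξ • 𝓕⁻ (fun z => (u z : ℂ)) ξ) x := by
  have hsymbol : Integrable fun ξ : E => (csSymbol s y ξ : ℂ) :=
    ((rapidDecayOn_csSymbol hs hy).integrable Set.self_mem_Ici
      (measurable_uncurry_csSymbol s).of_uncurry_left.aestronglyMeasurable).ofReal
  simp_rw [← Complex.coe_smul]
  rw [← integral_fourier_sub_smul_eq_fourier hsymbol hu.ofReal, csExtension, ← integral_const_mul,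
    ← integral_complex_ofReal]
  refine integral_congr_ae (Eventually.of_forall fun v => ?_)
  simp only [fourier_csSymbol hs hy, smul_eq_mul, ← Complex.ofReal_mul]
  congr 1
  ring

end Extension

section EnergyDensity

variable {E : Type*} [NormedAddCommGroup E] {s y : ℝ}

/-- The weighted Dirichlet energy, at frequency `ξ` and height `y`, of the extension of order `s` of
a function whose Fourier coefficients are `v`. -/
noncomputable def csEnergyDensity (s : ℝ) (v : E → ℂ) (y : ℝ) (ξ : E) : ℝ :=
  y ^ (1 - 2 * s) * (4 * π ^ 2 * ‖ξ‖ ^ 2 * csSymbol s y ξ ^ 2 + csSymbolDeriv s y ξ ^ 2) * ‖v ξ‖ ^ 2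

theorem csEnergyDensity_nonneg (s : ℝ) (v : E → ℂ) (hy : 0 ≤ y) (ξ : E) :
    0 ≤ csEnergyDensity s v y ξ := by
  unfold csEnergyDensity
  positivity

theorem csEnergyDensity_eq_mul_extGamma_energy (s : ℝ) (v : E → ℂ) (y : ℝ) (ξ : E) :
    csEnergyDensity s v y ξ = ‖v ξ‖ ^ 2 / Gamma s ^ 2 *
      (y ^ (1 - 2 * s) * (4 * (π ^ 2 * ‖ξ‖ ^ 2) * extGamma s (π ^ 2 * ‖ξ‖ ^ 2 * y ^ 2) ^ 2 +
        (2 * (π ^ 2 * ‖ξ‖ ^ 2) * y * extGamma (s - 1) (π ^ 2 * ‖ξ‖ ^ 2 * y ^ 2)) ^ 2)) := by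
  simp only [csEnergyDensity, csSymbol, csSymbolDeriv, div_pow, neg_sq]
  ring

theorem lintegral_csEnergyDensity (hs : s ∈ Set.Ioo 0 1) (v : E → ℂ) (ξ : E) :
    ∫⁻ y in Set.Ioi 0, ENNReal.ofReal (csEnergyDensity s v y ξ) =
      ENNReal.ofReal (2 * Gamma (1 - s) / Gamma s * ((π ^ 2 * ‖ξ‖ ^ 2) ^ s * ‖v ξ‖ ^ 2)) := by
  have hnn : 0 ≤ ‖v ξ‖ ^ 2 / Gamma s ^ 2 := by positivity
  simp_rw [csEnergyDensity_eq_mul_extGamma_energy, ENNReal.ofReal_mul hnn]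
  rw [lintegral_const_mul' _ _ ENNReal.ofReal_ne_top, lintegral_extGamma_energy hs (by positivity),
    ← ENNReal.ofReal_mul hnn]
  congr 1
  field_simp

end EnergyDensity

section Energy

open scoped FourierTransform

variable {E : Type*} [NormedAddCommGroup E] [InnerProductSpace ℝ E] [FiniteDimensional ℝ E]
  [MeasurableSpace E] [BorelSpace E] {s y B : ℝ} {v : E → ℂ} {w : E → ℝ → ℝ}

theorem aestronglyMeasurable_csSymbol_smul (s y : ℝ) (hv : AEStronglyMeasurable v) :
    AEStronglyMeasurable fun ξ => csSymbol s y ξ • v ξ :=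
  (measurable_uncurry_csSymbol s).of_uncurry_left.aestronglyMeasurable.smul hv

theorem aestronglyMeasurable_csSymbolDeriv_smul (s y : ℝ) (hv : AEStronglyMeasurable v) :
    AEStronglyMeasurable fun ξ => csSymbolDeriv s y ξ • v ξ :=
  (measurable_uncurry_csSymbolDeriv s).of_uncurry_left.aestronglyMeasurable.smul hv

theorem hasDerivAt_fourier_csSymbol_smul (hs : 0 < s) (hy : 0 < y) (hv : AEStronglyMeasurable v)
    (hB : ∀ ξ, ‖v ξ‖ ≤ B) (x : E) :
    HasDerivAt (fun t => 𝓕 (fun ξ => csSymbol s t ξ • v ξ) x)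
      (𝓕 (fun ξ => csSymbolDeriv s y ξ • v ξ) x) y := by
  have hy₂ : 0 < y / 2 := half_pos hy
  obtain ⟨G, hG, hle⟩ :=
    ((rapidDecayOn_csSymbolDeriv (E := E) hs hy₂).smul_of_norm_le hB).exists_integrable_bound volume
  exact hasDerivAt_fourier_of_dominated (Ici_mem_nhds (half_lt_self hy))
    (fun t => aestronglyMeasurable_csSymbol_smul s t hv)
    (((rapidDecayOn_csSymbol hs hy).smul_of_norm_le hB).integrable Set.self_mem_Ici
      (aestronglyMeasurable_csSymbol_smul s y hv))
    (aestronglyMeasurable_csSymbolDeriv_smul s y hv) hG hle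
    (fun t ht ξ => (hasDerivAt_csSymbol s (hy₂.trans_le ht) ξ).smul_const (v ξ)) x

theorem deriv_sq_eq_norm_fourier_csSymbolDeriv_sq (hs : 0 < s) (hy : 0 < y)
    (hv : AEStronglyMeasurable v) (hB : ∀ ξ, ‖v ξ‖ ≤ B) {x : E}
    (hw : ∀ t, 0 < t → (w x t : ℂ) = 𝓕 (fun ξ => csSymbol s t ξ • v ξ) x) :
    deriv (fun t => w x t) y ^ 2 = ‖𝓕 (fun ξ => csSymbolDeriv s y ξ • v ξ) x‖ ^ 2 := by
  have hderiv := (hasDerivAt_fourier_csSymbol_smul hs hy hv hB x).congr_of_eventuallyEq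
    (f₁ := fun t => (w x t : ℂ)) (by filter_upwards [Ioi_mem_nhds hy] with t ht using hw t ht)
  rw [← ofReal_deriv hderiv, Complex.norm_real, norm_eq_abs, sq_abs]

theorem integral_slice_energy (hs : 0 < s) (hy : 0 < y) (hv : AEStronglyMeasurable v)
    (hB : ∀ ξ, ‖v ξ‖ ≤ B)
    (hw : ∀ x t, 0 < t → (w x t : ℂ) = 𝓕 (fun ξ => csSymbol s t ξ • v ξ) x) :
    ∫ x, y ^ (1 - 2 * s) * (‖fderiv ℝ (fun x' => w x' y) x‖ ^ 2 + deriv (fun t => w x t) y ^ 2) =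
      ∫ ξ, csEnergyDensity s v y ξ := by
  have hm := aestronglyMeasurable_csSymbol_smul s y hv
  have hm' := aestronglyMeasurable_csSymbolDeriv_smul s y hv
  have hd := (rapidDecayOn_csSymbol (E := E) hs hy).smul_of_norm_le hB
  have hd' := (rapidDecayOn_csSymbolDeriv (E := E) hs hy).smul_of_norm_le hB
  have hmoment := hd.memLp_two_norm_pow_mul_norm Set.self_mem_Ici hm 1
  have hint' := hd'.integrable Set.self_mem_Ici hm'
  have hmem' := hd'.memLp_two Set.self_mem_Ici hm'
  obtain ⟨hgrad, hgrad_eq⟩ := integral_norm_fderiv_sq_of_eq_fourier (fun x => hw x y hy)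
    (hd.integrable Set.self_mem_Ici hm)
    (by simpa only [pow_one] using hd.integrable_norm_pow_mul_norm Set.self_mem_Ici hm 1)
    (by simpa only [pow_one] using hmoment)
  have hdensity : ∀ ξ, csEnergyDensity s v y ξ = y ^ (1 - 2 * s) *
      (4 * π ^ 2 * ‖ξ‖ ^ 2 * ‖csSymbol s y ξ • v ξ‖ ^ 2 + ‖csSymbolDeriv s y ξ • v ξ‖ ^ 2) :=
    fun ξ => by
      simp only [norm_smul, mul_pow, norm_eq_abs, sq_abs, csEnergyDensity]
      ring
  have hmoment_sq : Integrable fun ξ => 4 * π ^ 2 * ‖ξ‖ ^ 2 * ‖csSymbol s y ξ • v ξ‖ ^ 2 :=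
    (hmoment.integrable_sq.const_mul (4 * π ^ 2)).congr (Eventually.of_forall fun ξ => by ring)
  simp_rw [hdensity, fun x => deriv_sq_eq_norm_fourier_csSymbolDeriv_sq hs hy hv hB (hw x)]
  rw [integral_const_mul, integral_const_mul,
    integral_add hmoment_sq (hmem'.integrable_norm_pow two_ne_zero),
    integral_add hgrad ((memLp_fourier hint' hmem').integrable_norm_pow two_ne_zero), hgrad_eq,
    integral_norm_sq_fourier hint' hmem']

theorem aestronglyMeasurable_uncurry_csEnergyDensity (s : ℝ) (hv : AEStronglyMeasurable v) :
    AEStronglyMeasurable (Function.uncurry (csEnergyDensity s v))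
      ((volume.restrict (Set.Ioi 0)).prod volume) := by
  have hm := measurable_uncurry_csSymbol (E := E) s
  have hm' := measurable_uncurry_csSymbolDeriv (E := E) s
  have hsymbols : Measurable fun p : ℝ × E => p.1 ^ (1 - 2 * s) *
      (4 * π ^ 2 * ‖p.2‖ ^ 2 * csSymbol s p.1 p.2 ^ 2 + csSymbolDeriv s p.1 p.2 ^ 2) := by
    unfold Function.uncurry at hm hm'
    fun_prop
  exact hsymbols.aestronglyMeasurable.mul (hv.comp_snd.norm.pow 2)

theorem integral_csEnergyDensity (hs : s ∈ Set.Ioo 0 1) (hv : AEStronglyMeasurable v)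
    (hE : Integrable fun ξ => (π ^ 2 * ‖ξ‖ ^ 2) ^ s * ‖v ξ‖ ^ 2) :
    IntegrableOn (fun y => ∫ ξ, csEnergyDensity s v y ξ) (Set.Ioi 0) ∧
      ∫ y in Set.Ioi (0 : ℝ), ∫ ξ, csEnergyDensity s v y ξ =
        2 * Gamma (1 - s) / Gamma s * ∫ ξ, (π ^ 2 * ‖ξ‖ ^ 2) ^ s * ‖v ξ‖ ^ 2 := by
  have hGamma : 0 < Gamma s := Real.Gamma_pos_of_pos hs.1
  have hGamma' : 0 < Gamma (1 - s) := Real.Gamma_pos_of_pos (sub_pos.2 hs.2)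
  set μ : Measure (ℝ × E) := (volume.restrict (Set.Ioi 0)).prod volume
  have hm : AEStronglyMeasurable (Function.uncurry (csEnergyDensity s v)) μ :=
    aestronglyMeasurable_uncurry_csEnergyDensity s hv
  have hnn : 0 ≤ᵐ[μ] Function.uncurry (csEnergyDensity s v) :=
    (Measure.quasiMeasurePreserving_fst.ae (ae_restrict_mem measurableSet_Ioi)).mono
      fun p hp => csEnergyDensity_nonneg s v (le_of_lt hp) p.2
  have hlintegral : ∫⁻ p, ENNReal.ofReal (Function.uncurry (csEnergyDensity s v) p) ∂μ =
      ENNReal.ofReal (2 * Gamma (1 - s) / Gamma s * ∫ ξ, (π ^ 2 * ‖ξ‖ ^ 2) ^ s * ‖v ξ‖ ^ 2) := by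
    rw [lintegral_prod_symm _ hm.aemeasurable.ennreal_ofReal]
    simp_rw [Function.uncurry_apply_pair, lintegral_csEnergyDensity hs]
    rw [← integral_const_mul, ofReal_integral_eq_lintegral_ofReal (hE.const_mul _)
      (Eventually.of_forall fun ξ => by positivity)]
  have hint : Integrable (Function.uncurry (csEnergyDensity s v)) μ :=
    ⟨hm, (hasFiniteIntegral_iff_ofReal hnn).2 (hlintegral.trans_lt ENNReal.ofReal_lt_top)⟩
  refine ⟨hint.integral_prod_left, ?_⟩
  rw [integral_integral hint, ← Function.uncurry_def, integral_eq_lintegral_of_nonneg_ae hnn hm,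
    hlintegral, ENNReal.toReal_ofReal (by positivity)]

end Energy

section ExtensionEnergy

open scoped FourierTransform

variable {E : Type*} [NormedAddCommGroup E] [InnerProductSpace ℝ E] [FiniteDimensional ℝ E]
  [MeasurableSpace E] [BorelSpace E] {s : ℝ}

theorem integral_csExtension_energy (hs : s ∈ Set.Ioo 0 1) {u : E → ℝ} (hu : Integrable u)
    (hE : Integrable fun ξ => (π ^ 2 * ‖ξ‖ ^ 2) ^ s * ‖𝓕⁻ (fun z => (u z : ℂ)) ξ‖ ^ 2) :
    IntegrableOn (fun y => ∫ x, y ^ (1 - 2 * s) * (‖fderiv ℝ (fun x' => csExtension s u x' y) x‖ ^ 2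
        + deriv (fun t => csExtension s u x t) y ^ 2)) (Set.Ioi 0) ∧
      ∫ y in Set.Ioi (0 : ℝ), ∫ x, y ^ (1 - 2 * s) *
        (‖fderiv ℝ (fun x' => csExtension s u x' y) x‖ ^ 2
          + deriv (fun t => csExtension s u x t) y ^ 2) =
        2 * Gamma (1 - s) / Gamma s *
          ∫ ξ, (π ^ 2 * ‖ξ‖ ^ 2) ^ s * ‖𝓕⁻ (fun z => (u z : ℂ)) ξ‖ ^ 2 := by
  have hcont : Continuous (𝓕⁻ fun z => (u z : ℂ)) :=
    VectorFourier.fourierIntegral_continuous Real.continuous_fourierChar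
      (continuous_fst.inner continuous_snd).neg hu.ofReal
  have hbound : ∀ ξ, ‖𝓕⁻ (fun z => (u z : ℂ)) ξ‖ ≤ ∫ z, ‖(u z : ℂ)‖ :=
    VectorFourier.norm_fourierIntegral_le_integral_norm _ _ _ _
  have hslice := fun (y : ℝ) (hy : y ∈ Set.Ioi 0) => integral_slice_energy hs.1 hy
    hcont.aestronglyMeasurable hbound fun x t ht => csExtension_eq_fourier hs.1 ht hu x
  rw [integrableOn_congr_fun hslice measurableSet_Ioi,
    setIntegral_congr_fun measurableSet_Ioi hslice]
  exact integral_csEnergyDensity hs hcont.aestronglyMeasurable hE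

end ExtensionEnergy

theorem integrable_rpow_norm_mul_norm_sq {E F : Type*} [NormedAddCommGroup E] [NormedSpace ℝ E]
    [MeasurableSpace E] [BorelSpace E] [SecondCountableTopology E] [NormedAddCommGroup F]
    [NormedSpace ℝ F] (μ : Measure E) [μ.HasTemperateGrowth] {r : ℝ} (hr : 0 ≤ r)
    (v : SchwartzMap E F) : Integrable (fun ξ => ‖ξ‖ ^ r * ‖v ξ‖ ^ 2) μ := by
  set C := SchwartzMap.seminorm ℝ 0 0 v
  have hbound : Integrable (fun ξ => (‖v ξ‖ + ‖ξ‖ ^ ⌈r⌉₊ * ‖v ξ‖) * C) μ :=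
    (v.integrable.norm.add (v.integrable_pow_mul μ ⌈r⌉₊)).mul_const C
  refine hbound.mono' (by have := v.continuous; fun_prop) (Eventually.of_forall fun ξ => ?_)
  have hpow : ‖ξ‖ ^ r ≤ 1 + ‖ξ‖ ^ ⌈r⌉₊ := by
    rcases le_total ‖ξ‖ 1 with h | h
    · exact (rpow_le_one (norm_nonneg ξ) h hr).trans (le_add_of_nonneg_right (by positivity))
    · rw [← rpow_natCast]
      exact (rpow_le_rpow_of_exponent_le h (Nat.le_ceil r)).trans
        (le_add_of_nonneg_left zero_le_one)
  rw [norm_of_nonneg (by positivity)]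
  calc ‖ξ‖ ^ r * ‖v ξ‖ ^ 2 ≤ (1 + ‖ξ‖ ^ ⌈r⌉₊) * (‖v ξ‖ * C) := by
        rw [sq]
        gcongr
        exact v.norm_le_seminorm ℝ ξ
    _ = (‖v ξ‖ + ‖ξ‖ ^ ⌈r⌉₊ * ‖v ξ‖) * C := by ring

section FourierConventions

open scoped FourierTransform SchwartzMap

variable {n : ℕ}

theorem FT_eq_fourierInv (u : EuclideanSpace ℝ (Fin n) → ℂ) (ξ : EuclideanSpace ℝ (Fin n)) :
    FT u ξ = (((2 * π) ^ (-(n : ℝ) / 2) : ℝ) : ℂ) * 𝓕⁻ u ((-(2 * π)⁻¹ : ℝ) • ξ) := by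
  rw [FT, Real.fourierInv_eq']
  congr 2 with x
  rw [smul_eq_mul, inner_smul_right, real_inner_comm x ξ,
    show 2 * π * (-(2 * π)⁻¹ * ⟪x, ξ⟫) = -⟪x, ξ⟫ by field_simp]
  congr 2
  push_cast
  ring

theorem rpow_mul_norm_FT_sq (s : ℝ) (u : EuclideanSpace ℝ (Fin n) → ℂ)
    (ξ : EuclideanSpace ℝ (Fin n)) :
    ‖ξ‖ ^ (2 * s) * ‖FT u ξ‖ ^ 2 = 4 ^ s * ((2 * π) ^ n)⁻¹ *
      (fun η => (π ^ 2 * ‖η‖ ^ 2) ^ s * ‖𝓕⁻ u η‖ ^ 2) ((-(2 * π)⁻¹ : ℝ) • ξ) := by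
  have hpi : 0 < 2 * π := two_pi_pos
  have hconst : ((2 * π) ^ (-(n : ℝ) / 2)) ^ 2 = ((2 * π) ^ n)⁻¹ := by
    rw [← rpow_natCast, ← rpow_natCast, ← rpow_mul hpi.le, ← rpow_neg hpi.le]
    congr 1
    push_cast
    ring
  have hnorm : ‖ξ‖ ^ (2 * s) = 4 ^ s * (π ^ 2 * ‖(-(2 * π)⁻¹ : ℝ) • ξ‖ ^ 2) ^ s := by
    rw [← mul_rpow (by norm_num) (by positivity), norm_smul, norm_neg,
      norm_of_nonneg (inv_pos.2 hpi).le, rpow_mul (norm_nonneg ξ), rpow_two]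
    congr 1
    field_simp
    norm_num
  rw [FT_eq_fourierInv, norm_mul, Complex.norm_real, norm_of_nonneg (by positivity), mul_pow,
    hconst, hnorm]
  ring

theorem integral_rpow_mul_norm_FT_sq (s : ℝ) (u : EuclideanSpace ℝ (Fin n) → ℂ) :
    ∫ ξ : EuclideanSpace ℝ (Fin n), ‖ξ‖ ^ (2 * s) * ‖FT u ξ‖ ^ 2 =
      4 ^ s * ∫ ξ : EuclideanSpace ℝ (Fin n), (π ^ 2 * ‖ξ‖ ^ 2) ^ s * ‖𝓕⁻ u ξ‖ ^ 2 := by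
  simp_rw [rpow_mul_norm_FT_sq]
  rw [integral_const_mul, Measure.integral_comp_smul volume
    (fun η : EuclideanSpace ℝ (Fin n) => (π ^ 2 * ‖η‖ ^ 2) ^ s * ‖𝓕⁻ u η‖ ^ 2),
    finrank_euclideanSpace_fin, abs_inv, abs_pow, abs_neg, abs_of_pos (inv_pos.2 two_pi_pos),
    inv_pow, inv_inv, smul_eq_mul]
  field_simp

theorem integrable_rpow_mul_norm_FT_sq_iff (s : ℝ) (u : EuclideanSpace ℝ (Fin n) → ℂ) :
    (Integrable fun ξ => ‖ξ‖ ^ (2 * s) * ‖FT u ξ‖ ^ 2) ↔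
      Integrable fun ξ : EuclideanSpace ℝ (Fin n) => (π ^ 2 * ‖ξ‖ ^ 2) ^ s * ‖𝓕⁻ u ξ‖ ^ 2 := by
  have hne : (4 : ℝ) ^ s * ((2 * π) ^ n)⁻¹ ≠ 0 := by positivity
  simp_rw [rpow_mul_norm_FT_sq]
  rw [integrable_const_mul_iff hne.isUnit, integrable_comp_smul_iff volume
    (fun η : EuclideanSpace ℝ (Fin n) => (π ^ 2 * ‖η‖ ^ 2) ^ s * ‖𝓕⁻ u η‖ ^ 2)
    (neg_ne_zero.2 (inv_ne_zero two_pi_pos.ne'))]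

theorem integrable_rpow_mul_norm_FT_sq {s : ℝ} (hs : 0 ≤ s)
    (u : SchwartzMap (EuclideanSpace ℝ (Fin n)) ℂ) :
    Integrable fun ξ => ‖ξ‖ ^ (2 * s) * ‖FT u ξ‖ ^ 2 := by
  have hrpow : ∀ ξ : EuclideanSpace ℝ (Fin n),
      (π ^ 2 * ‖ξ‖ ^ 2) ^ s = (π ^ 2) ^ s * ‖ξ‖ ^ (2 * s) := fun ξ => by
    rw [mul_rpow (by positivity) (by positivity), rpow_mul (norm_nonneg ξ), rpow_two]
  rw [integrable_rpow_mul_norm_FT_sq_iff, ← SchwartzMap.fourierInv_coe]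
  simp_rw [hrpow, mul_assoc]
  exact (integrable_rpow_norm_mul_norm_sq volume (by positivity) (𝓕⁻ u)).const_mul _

end FourierConventions

theorem four_rpow_mul_two_mul_div_Cs {s : ℝ} (hs : 0 < s) :
    4 ^ s * (2 * s / Cs s) = 2 * Gamma (1 - s) / Gamma s := by
  rw [Cs, add_comm 1 s, Gamma_add_one hs.ne']
  field_simp

theorem stmt13_general {n : ℕ} {s : ℝ} (hs : s ∈ Set.Ioo (0 : ℝ) 1)
    {u : EuclideanSpace ℝ (Fin n) → ℝ} (hu : Integrable u)
    (hE : Integrable fun ξ => ‖ξ‖ ^ (2 * s) * ‖FT (fun z => ((u z : ℝ) : ℂ)) ξ‖ ^ 2)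
    {w : EuclideanSpace ℝ (Fin n) → ℝ → ℝ}
    (hw : ∀ (x : EuclideanSpace ℝ (Fin n)) (y : ℝ),
      w x y = (1 / ∫ z : EuclideanSpace ℝ (Fin n), (‖z‖ ^ 2 + 1) ^ (-((n : ℝ) + 2 * s) / 2)) *
        ∫ ξ : EuclideanSpace ℝ (Fin n),
          y ^ (2 * s) * u ξ * (‖x - ξ‖ ^ 2 + y ^ 2) ^ (-((n : ℝ) + 2 * s) / 2)) :
    IntegrableOn (fun y => ∫ x : EuclideanSpace ℝ (Fin n), y ^ (1 - 2 * s) *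
        (‖fderiv ℝ (fun x' => w x' y) x‖ ^ 2 + (deriv (fun t => w x t) y) ^ 2)) (Set.Ioi 0) ∧
      (∫ y in Set.Ioi (0 : ℝ), ∫ x : EuclideanSpace ℝ (Fin n), y ^ (1 - 2 * s) *
          (‖fderiv ℝ (fun x' => w x' y) x‖ ^ 2 + (deriv (fun t => w x t) y) ^ 2)) =
        (2 * s / Cs s) * ∫ ξ : EuclideanSpace ℝ (Fin n),
          ‖ξ‖ ^ (2 * s) * ‖FT (fun z => ((u z : ℝ) : ℂ)) ξ‖ ^ 2 := by
  obtain rfl : w = csExtension s u := by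
    ext x y
    rw [hw, csExtension, finrank_euclideanSpace_fin]
  rw [integral_rpow_mul_norm_FT_sq, ← mul_assoc, mul_comm (2 * s / Cs s),
    four_rpow_mul_two_mul_div_Cs hs.1]
  exact integral_csExtension_energy hs hu ((integrable_rpow_mul_norm_FT_sq_iff s _).1 hE)

/-- For Schwartz `u` and its normalized Caffarelli–Silvestre extension `w`, the weighted
Dirichlet energy of `w` equals `(2s/C_s) ∫ |ξ|^{2s}|𝓕u(ξ)|² dξ`. Here
`|∇w|² = ‖∇ₓw‖² + (∂_y w)²` is the square of the full gradient in `(x,y)`. -/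
theorem stmt13 {n : ℕ} (hn : 1 ≤ n) (s : ℝ) (hs : s ∈ Set.Ioo (0 : ℝ) 1)
    (u : SchwartzMap (EuclideanSpace ℝ (Fin n)) ℝ)
    (w : EuclideanSpace ℝ (Fin n) → ℝ → ℝ)
    (hw : ∀ (x : EuclideanSpace ℝ (Fin n)) (y : ℝ),
      w x y = (1 / ∫ z : EuclideanSpace ℝ (Fin n), (‖z‖ ^ 2 + 1) ^ (-((n : ℝ) + 2 * s) / 2)) *
        ∫ ξ : EuclideanSpace ℝ (Fin n),
          y ^ (2 * s) * u ξ * (‖x - ξ‖ ^ 2 + y ^ 2) ^ (-((n : ℝ) + 2 * s) / 2)) :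
    (∫ y in Set.Ioi (0 : ℝ), ∫ x : EuclideanSpace ℝ (Fin n),
        y ^ (1 - 2 * s) *
          (‖fderiv ℝ (fun x' => w x' y) x‖ ^ 2 + (deriv (fun t => w x t) y) ^ 2))
      = (2 * s / Cs s) *
        ∫ ξ : EuclideanSpace ℝ (Fin n),
          ‖ξ‖ ^ (2 * s) * ‖FT (fun z => ((u z : ℝ) : ℂ)) ξ‖ ^ 2 :=
  (stmt13_general hs u.integrable
    (integrable_rpow_mul_norm_FT_sq hs.1.le (SchwartzMap.postcompCLM Complex.ofRealCLM u)) hw).2
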